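/- arXiv:2603.09543 — 5 statements merged into one kernel-verified Lean document; each statement's English description precedes it below -/
import Mathlib

section
/- Let E be a real vector space with an ℝ-bilinear bracket [·,·], and let I, J be linear endomorphisms of E with I² = J² = −Id and IJ = −JI. Then for all A,B ∈ E: N_{IJ}(A,B) = (1/2)[N_I(JA,JB) + N_J(IA,IB) + N_I(A,B) + N_J(A,B) − I·N_J(IA,B) − I·N_J(A,IB) − J·N_I(JA,B) − J·N_I(A,JB)]. -/
/-- The Nijenhuis concomitant `N(I,J)` of two endomorphisms with respect to an
ℝ-bilinear bracket `br`. -/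
noncomputable def Nij {E : Type*} [AddCommGroup E] [Module ℝ E]
    (br : E →ₗ[ℝ] E →ₗ[ℝ] E) (I J : Module.End ℝ E) (A B : E) : E :=
  (1 / 2 : ℝ) • (br (I A) (J B) + br (J A) (I B)
    - I (br A (J B)) - I (br (J A) B)
    - J (br A (I B)) - J (br (I A) B)
    + I (J (br A B)) + J (I (br A B)))

/-!
Let `N_I` act as an operator on brackets. If `I² = -1`, then `N_I + 1 = ab + ac + bc`, where `a` and
`b` apply `I` to the first and the second argument and `c` applies `-I` to the value. Operators on
different slots commute, while on each slot those coming from `I` and from `J` anticommute. Hence in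
the anticommutator of `N_I + 1` and `N_J + 1` products sharing exactly one slot cancel, and those
sharing both slots add up to `2 (N_{IJ} + 1)`. The formula is this operator identity evaluated at a
bracket, because `N_J` takes the bracket `N_I` to
`N_I(JA, JB) - J N_I(JA, B) - J N_I(A, JB) - N_I(A, B)`.
-/

section Ring

variable {S : Type*} [Ring S]

theorem anticommutator_eq_of_semiconjBy {p q r p' q' r' : S}
    (hp : SemiconjBy p (p' + q' + r') (p' - q' - r'))
    (hq : SemiconjBy q (p' + q' + r') (-p' + q' - r'))
    (hr : SemiconjBy r (p' + q' + r') (-p' - q' + r')) :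
    (p + q + r) * (p' + q' + r') + (p' + q' + r') * (p + q + r) =
      2 * (p' * p + q' * q + r' * r) := by
  rw [add_mul, add_mul, hp.eq, hq.eq, hr.eq]
  noncomm_ring

theorem anticommutator_pairwise_products {a b c a' b' c' : S}
    (haa : SemiconjBy a a' (-a')) (hbb : SemiconjBy b b' (-b')) (hcc : SemiconjBy c c' (-c'))
    (hab : Commute a b') (hac : Commute a c') (hba : Commute b a')
    (hbc : Commute b c') (hca : Commute c a') (hcb : Commute c b') :
    (a * b + a * c + b * c) * (a' * b' + a' * c' + b' * c') +
        (a' * b' + a' * c' + b' * c') * (a * b + a * c + b * c) =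
      2 * (a' * a * (b' * b) + a' * a * (c' * c) + b' * b * (c' * c)) := by
  have hab_a' : SemiconjBy (a * b) a' (-a') := haa.mul_left hba
  have hab_b' : SemiconjBy (a * b) b' (-b') := hab.neg_right.semiconjBy.mul_left hbb
  have hab_c' : SemiconjBy (a * b) c' c' := hac.mul_left hbc
  have hac_a' : SemiconjBy (a * c) a' (-a') := haa.mul_left hca
  have hac_b' : SemiconjBy (a * c) b' b' := hab.mul_left hcb
  have hac_c' : SemiconjBy (a * c) c' (-c') := hac.neg_right.semiconjBy.mul_left hcc
  have hbc_a' : SemiconjBy (b * c) a' a' := hba.mul_left hca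
  have hbc_b' : SemiconjBy (b * c) b' (-b') := hbb.mul_left hcb
  have hbc_c' : SemiconjBy (b * c) c' (-c') := hbc.neg_right.semiconjBy.mul_left hcc
  rw [anticommutator_eq_of_semiconjBy, hab.symm.mul_mul_mul_comm, hac.symm.mul_mul_mul_comm,
    hbc.symm.mul_mul_mul_comm]
  · simpa [sub_eq_add_neg] using ((hab_a'.mul_right hab_b').add_right
      (hab_a'.mul_right hab_c')).add_right (hab_b'.mul_right hab_c')
  · simpa [sub_eq_add_neg] using ((hac_a'.mul_right hac_b').add_right
      (hac_a'.mul_right hac_c')).add_right (hac_b'.mul_right hac_c')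
  · simpa [sub_eq_add_neg] using ((hbc_a'.mul_right hbc_b').add_right
      (hbc_a'.mul_right hbc_c')).add_right (hbc_b'.mul_right hbc_c')

theorem mul_mul_self_eq_neg_one_of_anticommute {x y : S}
    (hx : x * x = -1) (hy : y * y = -1) (hxy : x * y = -(y * x)) : x * y * (x * y) = -1 := by
  calc x * y * (x * y) = -(y * (x * x) * y) := by nth_rw 1 [hxy]; noncomm_ring
    _ = -1 := by rw [hx, mul_neg_one, neg_mul, hy, neg_neg]

end Ring

section Torsion

variable {R E : Type*} [CommRing R] [AddCommGroup E] [Module R E]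

/-- The operator on brackets that applies `I` to the first argument. -/
def precompFst (I : Module.End R E) : Module.End R (E →ₗ[R] E →ₗ[R] E) :=
  LinearMap.lcomp R (E →ₗ[R] E) I

/-- The operator on brackets that applies `I` to the second argument. -/
def precompSnd (I : Module.End R E) : Module.End R (E →ₗ[R] E →ₗ[R] E) :=
  LinearMap.compRight R (LinearMap.lcomp R E I)

/-- The operator on brackets that applies `-I` to the value; the sign makes `nijenhuisTorsion` and
`reducedTorsion` polynomials with positive coefficients in the three slot operators. -/
def negPostcomp (I : Module.End R E) : Module.End R (E →ₗ[R] E →ₗ[R] E) :=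
  LinearMap.compRight R (LinearMap.compRight R (-I))

/-- The Nijenhuis torsion `N_I`, as an operator on brackets: `nijenhuisTorsion I br` is the torsion
of `I` with respect to `br`, and is itself a bracket to which further operators apply. -/
def nijenhuisTorsion (I : Module.End R E) : Module.End R (E →ₗ[R] E →ₗ[R] E) :=
  (precompFst I + negPostcomp I) * (precompSnd I + negPostcomp I)

/-- The Nijenhuis torsion without its term `I² [A, B]`, as an operator on brackets: the second
elementary symmetric polynomial in the three slot operators of `I`. -/
def reducedTorsion (I : Module.End R E) : Module.End R (E →ₗ[R] E →ₗ[R] E) :=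
  precompFst I * precompSnd I + precompFst I * negPostcomp I + precompSnd I * negPostcomp I

section Apply

variable (I : Module.End R E) (br : E →ₗ[R] E →ₗ[R] E) (A B : E)

theorem precompFst_apply : precompFst I br A B = br (I A) B := rfl

theorem precompSnd_apply : precompSnd I br A B = br A (I B) := rfl

theorem negPostcomp_apply : negPostcomp I br A B = -I (br A B) := rfl

theorem nijenhuisTorsion_apply :
    nijenhuisTorsion I br A B =
      br (I A) (I B) - I (br (I A) B) - I (br A (I B)) + I (I (br A B)) := by
  simp only [nijenhuisTorsion, Module.End.mul_apply, LinearMap.add_apply, map_add, map_neg,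
    precompFst_apply, precompSnd_apply, negPostcomp_apply]
  abel

theorem reducedTorsion_apply :
    reducedTorsion I br A B = br (I A) (I B) - I (br (I A) B) - I (br A (I B)) := by
  simp only [reducedTorsion, Module.End.mul_apply, LinearMap.add_apply, precompFst_apply,
    precompSnd_apply, negPostcomp_apply, sub_eq_add_neg]

end Apply

theorem nijenhuisTorsion_add_one {I : Module.End R E} (hI : I * I = -1) :
    nijenhuisTorsion I + 1 = reducedTorsion I := by
  ext br A B
  have hI_apply : I (I (br A B)) = -br A B := LinearMap.congr_fun hI (br A B)
  simp only [LinearMap.add_apply, Module.End.one_apply, nijenhuisTorsion_apply,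
    reducedTorsion_apply, hI_apply, neg_add_cancel_right]

section Anticommute

variable {I J : Module.End R E}

theorem semiconjBy_precompFst_neg (hIJ : SemiconjBy I J (-J)) :
    SemiconjBy (precompFst I) (precompFst J) (-precompFst J) := by
  ext br A B
  have h : I (J A) = -J (I A) := LinearMap.congr_fun hIJ A
  simp only [Module.End.mul_apply, LinearMap.neg_apply, precompFst_apply, h, map_neg, neg_neg]

theorem semiconjBy_precompSnd_neg (hIJ : SemiconjBy I J (-J)) :
    SemiconjBy (precompSnd I) (precompSnd J) (-precompSnd J) := by
  ext br A B
  have h : I (J B) = -J (I B) := LinearMap.congr_fun hIJ B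
  simp only [Module.End.mul_apply, LinearMap.neg_apply, precompSnd_apply, h, map_neg, neg_neg]

theorem semiconjBy_negPostcomp_neg (hIJ : SemiconjBy I J (-J)) :
    SemiconjBy (negPostcomp I) (negPostcomp J) (-negPostcomp J) := by
  ext br A B
  have h : I (J (br A B)) = -J (I (br A B)) := LinearMap.congr_fun hIJ (br A B)
  simp only [Module.End.mul_apply, LinearMap.neg_apply, negPostcomp_apply, h, map_neg, neg_neg]

theorem negPostcomp_mul (hIJ : SemiconjBy I J (-J)) :
    negPostcomp (I * J) = negPostcomp J * negPostcomp I := by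
  ext br A B
  have h : I (J (br A B)) = -J (I (br A B)) := LinearMap.congr_fun hIJ (br A B)
  simp only [Module.End.mul_apply, negPostcomp_apply, h, map_neg]

theorem anticommutator_reducedTorsion (hIJ : SemiconjBy I J (-J)) :
    reducedTorsion I * reducedTorsion J + reducedTorsion J * reducedTorsion I =
      2 * reducedTorsion (I * J) := by
  have hfst_snd (K L : Module.End R E) : Commute (precompFst K) (precompSnd L) := rfl
  have hfst_post (K L : Module.End R E) : Commute (precompFst K) (negPostcomp L) := rfl
  have hsnd_post (K L : Module.End R E) : Commute (precompSnd K) (negPostcomp L) := rfl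
  have hfst_mul : precompFst (I * J) = precompFst J * precompFst I := rfl
  have hsnd_mul : precompSnd (I * J) = precompSnd J * precompSnd I := rfl
  rw [reducedTorsion, reducedTorsion, reducedTorsion, hfst_mul, hsnd_mul, negPostcomp_mul hIJ]
  exact anticommutator_pairwise_products (S := Module.End R (E →ₗ[R] E →ₗ[R] E))
    (semiconjBy_precompFst_neg hIJ) (semiconjBy_precompSnd_neg hIJ)
    (semiconjBy_negPostcomp_neg hIJ) (hfst_snd I J) (hfst_post I J) (hfst_snd J I).symm
    (hsnd_post I J) (hfst_post J I).symm (hsnd_post J I).symm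

theorem anticommutator_nijenhuisTorsion_add_one
    (hI : I * I = -1) (hJ : J * J = -1) (hIJ : I * J = -(J * I)) :
    (nijenhuisTorsion I + 1) * (nijenhuisTorsion J + 1) +
        (nijenhuisTorsion J + 1) * (nijenhuisTorsion I + 1) =
      2 * (nijenhuisTorsion (I * J) + 1) := by
  have hIJ_neg : SemiconjBy I J (-J) := hIJ.trans (neg_mul J I).symm
  rw [nijenhuisTorsion_add_one hI, nijenhuisTorsion_add_one hJ,
    nijenhuisTorsion_add_one (mul_mul_self_eq_neg_one_of_anticommute hI hJ hIJ),
    anticommutator_reducedTorsion hIJ_neg]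

theorem two_smul_nijenhuisTorsion_mul
    (hI : I * I = -1) (hJ : J * J = -1) (hIJ : I * J = -(J * I)) (br : E →ₗ[R] E →ₗ[R] E) :
    2 • nijenhuisTorsion (I * J) br =
      nijenhuisTorsion I (nijenhuisTorsion J br) + nijenhuisTorsion J (nijenhuisTorsion I br) +
        2 • nijenhuisTorsion I br + 2 • nijenhuisTorsion J br := by
  have h := LinearMap.congr_fun (anticommutator_nijenhuisTorsion_add_one hI hJ hIJ) br
  simp only [Module.End.mul_apply, LinearMap.add_apply, Module.End.one_apply,
    Module.End.ofNat_apply, map_add] at h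
  linear_combination (norm := module) -h

theorem nijenhuis_of_product_general
    (hI : I * I = -1) (hJ : J * J = -1) (hIJ : I * J = -(J * I))
    (br : E →ₗ[R] E →ₗ[R] E) (A B : E) :
    (2 : R) • nijenhuisTorsion (I * J) br A B =
      nijenhuisTorsion I br (J A) (J B) + nijenhuisTorsion J br (I A) (I B)
        + nijenhuisTorsion I br A B + nijenhuisTorsion J br A B
        - I (nijenhuisTorsion J br (I A) B) - I (nijenhuisTorsion J br A (I B))
        - J (nijenhuisTorsion I br (J A) B) - J (nijenhuisTorsion I br A (J B)) := by
  have h := LinearMap.congr_fun₂ (two_smul_nijenhuisTorsion_mul hI hJ hIJ br) A B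
  have hI_apply (x : E) : I (I x) = -x := LinearMap.congr_fun hI x
  have hJ_apply (x : E) : J (J x) = -x := LinearMap.congr_fun hJ x
  simp only [LinearMap.add_apply, LinearMap.smul_apply] at h
  rw [nijenhuisTorsion_apply I (nijenhuisTorsion J br),
    nijenhuisTorsion_apply J (nijenhuisTorsion I br), hI_apply, hJ_apply] at h
  linear_combination (norm := module) h

end Anticommute

end Torsion

theorem Nij_self {E : Type*} [AddCommGroup E] [Module ℝ E]
    (br : E →ₗ[ℝ] E →ₗ[ℝ] E) (I : Module.End ℝ E) (A B : E) :
    Nij br I I A B = nijenhuisTorsion I br A B := by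
  rw [Nij, nijenhuisTorsion_apply]
  module

/-- Nijenhuis expression for the product `IJ` of two anticommuting
generalized almost complex structures. -/
theorem nijenhuis_of_product
    {E : Type*} [AddCommGroup E] [Module ℝ E]
    (br : E →ₗ[ℝ] E →ₗ[ℝ] E)
    (I J : Module.End ℝ E)
    (hI : I * I = -1) (hJ : J * J = -1) (hIJ : I * J = -(J * I)) :
    ∀ A B : E, Nij br (I * J) (I * J) A B =
      (1 / 2 : ℝ) • (Nij br I I (J A) (J B) + Nij br J J (I A) (I B)
        + Nij br I I A B + Nij br J J A B
        - I (Nij br J J (I A) B) - I (Nij br J J A (I B))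
        - J (Nij br I I (J A) B) - J (Nij br I I A (J B))) := by
  intro A B
  simp only [Nij_self, one_div]
  exact (eq_inv_smul_iff₀ two_ne_zero).2 (nijenhuis_of_product_general hI hJ hIJ br A B)
end

section
/- Let E be a real vector space with an ℝ-bilinear bracket [·,·], and let I, J be linear endomorphisms of E with I² = J² = −Id, IJ = −JI, N_I = 0 and N_J = 0. Then N_{IJ} = 0, i.e. the endomorphism IJ (which satisfies (IJ)² = −Id) has vanishing Nijenhuis tensor. -/
/-!
Write `T(I, J)` for the defect of `I`-linearity, in the first argument, of the defect of
`J`-linearity of the bracket in its second argument, so that `N_I = T(I, I)`, and put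
`C = T(I, J) + T(J, I) = 2 N(I, J)`. In its first slot `T` satisfies the Leibniz rule
`T(IJ, L)(A, B) = T(I, L)(JA, B) + I T(J, L)(A, B)`. Applying it to `I²`, which is a scalar, and to
the two expressions `IJ = -JI` shows that `C` is `I`-antilinear in `A`. Exchanging the arguments of
the bracket exchanges those of `C`, so `C` is likewise `J`-antilinear in `B`. Moving `I` and `J` out
of `C(IA, JB)` in the two possible orders gives `IJ C = JI C = -IJ C`, hence `2 IJ C = 0`. The
Leibniz rules in the two slots also give `T(IJ, IJ) = -IJ C`.
-/

theorem mul_mul_mul_self_of_anticomm {A : Type*} [Ring A] {x y : A} (h : x * y = -(y * x)) :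
    x * y * (x * y) = -(x * x * (y * y)) := by
  have hyx : y * x = -(x * y) := by rw [h, neg_neg]
  calc x * y * (x * y) = x * (y * x) * y := by simp only [mul_assoc]
    _ = -(x * x * (y * y)) := by rw [hyx]; noncomm_ring

section MixedTorsion

variable {R E : Type*} [CommRing R] [AddCommGroup E] [Module R E]

/-- The mixed torsion `T(I, J)` of two endomorphisms: the defect of `I`-linearity in `A` of the
defect of `J`-linearity in `B` of the bracket. The Nijenhuis tensor of `I` is `T(I, I)`; no factor
`1 / 2` occurs, so that `2` need not be invertible. -/
def mixedTorsion (br : E →ₗ[R] E →ₗ[R] E) (I J : Module.End R E) (A B : E) : E :=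
  br (I A) (J B) - J (br (I A) B) - I (br A (J B) - J (br A B))

/-- The polarization `T(I, J) + T(J, I)` of the Nijenhuis tensor, which is twice the Nijenhuis
concomitant `N(I, J)`. -/
def polarizedTorsion (br : E →ₗ[R] E →ₗ[R] E) (I J : Module.End R E) (A B : E) : E :=
  mixedTorsion br I J A B + mixedTorsion br J I A B

variable (br : E →ₗ[R] E →ₗ[R] E) (I J L : Module.End R E) (A B : E)

theorem mixedTorsion_neg_left : mixedTorsion br (-I) L A B = -mixedTorsion br I L A B := by
  simp only [mixedTorsion, LinearMap.neg_apply, map_neg]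
  abel

theorem mixedTorsion_neg_right : mixedTorsion br L (-I) A B = -mixedTorsion br L I A B := by
  simp only [mixedTorsion, LinearMap.neg_apply, map_neg, map_sub]
  abel

theorem mixedTorsion_smul_one_left (a : R) : mixedTorsion br (a • 1) L A B = 0 := by
  simp [mixedTorsion, smul_sub]

theorem mixedTorsion_mul_left :
    mixedTorsion br (I * J) L A B = mixedTorsion br I L (J A) B + I (mixedTorsion br J L A B) := by
  simp only [mixedTorsion, Module.End.mul_apply, map_sub]
  abel

variable {I L} in
theorem mixedTorsion_mul_right (h : Commute L I) :
    mixedTorsion br L (I * J) A B = mixedTorsion br L I A (J B) + I (mixedTorsion br L J A B) := by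
  have hLI (x : E) : L (I x) = I (L x) := LinearMap.congr_fun h x
  simp only [mixedTorsion, Module.End.mul_apply, map_sub, hLI]
  abel

theorem mixedTorsion_flip :
    mixedTorsion br.flip I J A B = mixedTorsion br J I B A + (I * J - J * I) (br B A) := by
  simp only [mixedTorsion, LinearMap.flip_apply, LinearMap.sub_apply, Module.End.mul_apply, map_sub]
  abel

theorem mixedTorsion_flip_self : mixedTorsion br.flip I I A B = mixedTorsion br I I B A := by
  simp [mixedTorsion_flip]

theorem polarizedTorsion_comm : polarizedTorsion br I J A B = polarizedTorsion br J I A B :=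
  add_comm _ _

theorem polarizedTorsion_flip :
    polarizedTorsion br.flip I J A B = polarizedTorsion br I J B A := by
  simp only [polarizedTorsion, mixedTorsion_flip, LinearMap.sub_apply]
  abel

variable {I J}

theorem mixedTorsion_apply_left_of_mul_self {a : R} (hI : I * I = a • 1) :
    mixedTorsion br I L (I A) B = -I (mixedTorsion br I L A B) := by
  rw [eq_neg_iff_add_eq_zero, ← mixedTorsion_mul_left, hI, mixedTorsion_smul_one_left]

variable {br}

theorem mixedTorsion_apply_left_of_anticomm (hIJ : I * J = -(J * I))
    (hNJ : ∀ A B, mixedTorsion br J J A B = 0) :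
    mixedTorsion br I J (J A) B = -J (mixedTorsion br I J A B) :=
  calc mixedTorsion br I J (J A) B = mixedTorsion br (I * J) J A B := by
        rw [mixedTorsion_mul_left, hNJ, map_zero, add_zero]
    _ = -mixedTorsion br (J * I) J A B := by rw [hIJ, mixedTorsion_neg_left]
    _ = -J (mixedTorsion br I J A B) := by rw [mixedTorsion_mul_left, hNJ, zero_add]

theorem polarizedTorsion_apply_left {a : R} (hI : I * I = a • 1) (hIJ : I * J = -(J * I))
    (hNI : ∀ A B, mixedTorsion br I I A B = 0) :
    polarizedTorsion br I J (I A) B = -I (polarizedTorsion br I J A B) := by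
  have hJI : J * I = -(I * J) := by rw [hIJ, neg_neg]
  rw [polarizedTorsion, mixedTorsion_apply_left_of_mul_self br J A B hI,
    mixedTorsion_apply_left_of_anticomm A B hJI hNI, polarizedTorsion, map_add, neg_add]

theorem polarizedTorsion_apply_right {b : R} (hJ : J * J = b • 1) (hIJ : I * J = -(J * I))
    (hNJ : ∀ A B, mixedTorsion br J J A B = 0) :
    polarizedTorsion br I J A (J B) = -J (polarizedTorsion br I J A B) := by
  have hJI : J * I = -(I * J) := by rw [hIJ, neg_neg]
  have hNJ_flip (A B : E) : mixedTorsion br.flip J J A B = 0 := by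
    rw [mixedTorsion_flip_self, hNJ]
  simpa only [polarizedTorsion_flip, polarizedTorsion_comm br J I] using
    polarizedTorsion_apply_left B A hJ hJI hNJ_flip

theorem two_smul_mul_polarizedTorsion_eq_zero {a b : R} (hI : I * I = a • 1) (hJ : J * J = b • 1)
    (hIJ : I * J = -(J * I)) (hNI : ∀ A B, mixedTorsion br I I A B = 0)
    (hNJ : ∀ A B, mixedTorsion br J J A B = 0) :
    (2 : R) • (I * J) (polarizedTorsion br I J A B) = 0 := by
  have h_left (A B : E) := polarizedTorsion_apply_left A B hI hIJ hNI
  have h_right (A B : E) := polarizedTorsion_apply_right A B hJ hIJ hNJ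
  have h_comm : (I * J) (polarizedTorsion br I J A B) = (J * I) (polarizedTorsion br I J A B) :=
    calc (I * J) (polarizedTorsion br I J A B) = polarizedTorsion br I J (I A) (J B) := by
          rw [h_left, h_right, map_neg, neg_neg, Module.End.mul_apply]
      _ = (J * I) (polarizedTorsion br I J A B) := by
          rw [h_right, h_left, map_neg, neg_neg, Module.End.mul_apply]
  rw [two_smul]
  nth_rw 1 [hIJ]
  rw [LinearMap.neg_apply, h_comm, neg_add_cancel]

theorem mixedTorsion_mul_self_of_anticomm (hIJ : I * J = -(J * I))
    (hNI : ∀ A B, mixedTorsion br I I A B = 0) (hNJ : ∀ A B, mixedTorsion br J J A B = 0) :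
    mixedTorsion br (I * J) (I * J) A B = -(I * J) (polarizedTorsion br I J A B) := by
  have h_left : mixedTorsion br I (I * J) (J A) B = -(I (J (mixedTorsion br I J A B))) := by
    rw [mixedTorsion_mul_right br J _ _ (Commute.refl I), hNI, zero_add,
      mixedTorsion_apply_left_of_anticomm A B hIJ hNJ, map_neg]
  have h_right : mixedTorsion br J (I * J) A B = -J (mixedTorsion br J I A B) := by
    rw [hIJ, mixedTorsion_neg_right, mixedTorsion_mul_right br I _ _ (Commute.refl J), hNJ,
      zero_add]
  rw [mixedTorsion_mul_left, h_left, h_right, polarizedTorsion]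
  simp only [Module.End.mul_apply, map_add, map_neg, neg_add]

theorem nijenhuis_product_vanishes_general (h2 : IsSMulRegular E (2 : R)) {a b : R}
    (hI : I * I = a • 1) (hJ : J * J = b • 1) (hIJ : I * J = -(J * I))
    (hNI : ∀ A B, mixedTorsion br I I A B = 0) (hNJ : ∀ A B, mixedTorsion br J J A B = 0) :
    (I * J) * (I * J) = -(a * b) • 1 ∧ ∀ A B, mixedTorsion br (I * J) (I * J) A B = 0 := by
  refine ⟨?_, fun A B => ?_⟩
  · rw [mul_mul_mul_self_of_anticomm hIJ, hI, hJ, smul_mul_smul_comm, one_mul, neg_smul]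
  · rw [mixedTorsion_mul_self_of_anticomm A B hIJ hNI hNJ, neg_eq_zero]
    exact h2.right_eq_zero_of_smul (two_smul_mul_polarizedTorsion_eq_zero A B hI hJ hIJ hNI hNJ)

end MixedTorsion

theorem nij_self_eq_mixedTorsion {E : Type*} [AddCommGroup E] [Module ℝ E] (br : E →ₗ[ℝ] E →ₗ[ℝ] E)
    (I : Module.End ℝ E) (A B : E) :
    Nij br I I A B = mixedTorsion br I I A B := by
  simp only [Nij, mixedTorsion, map_sub]
  module

/-- if two anticommuting generalized complex structures are
integrable, then so is their product `IJ`. -/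
theorem nijenhuis_product_vanishes
    {E : Type*} [AddCommGroup E] [Module ℝ E]
    (br : E →ₗ[ℝ] E →ₗ[ℝ] E)
    (I J : Module.End ℝ E)
    (hI : I * I = -1) (hJ : J * J = -1) (hIJ : I * J = -(J * I))
    (hNI : ∀ A B : E, Nij br I I A B = 0)
    (hNJ : ∀ A B : E, Nij br J J A B = 0) :
    (I * J) * (I * J) = -1 ∧ ∀ A B : E, Nij br (I * J) (I * J) A B = 0 := by
  simp only [nij_self_eq_mixedTorsion] at hNI hNJ ⊢
  simpa using nijenhuis_product_vanishes_general (a := -1) (b := -1)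
    (IsSMulRegular.of_ne_zero two_ne_zero) (by simpa using hI) (by simpa using hJ) hIJ hNI hNJ
end

section
/- Let E be a real vector space with an ℝ-bilinear bracket [·,·], and let I, J be linear endomorphisms of E with I² = J² = −Id, IJ = −JI, N_I = 0 and N_J = 0. Then the mixed Nijenhuis concomitant vanishes: N(I,J) = 0. -/
/-!
Precomposing a bilinear map with `I` in either argument and postcomposing it with `I` are three
commuting operations. Put `U_I φ = φ - φ(I·, I·)` and `V_I φ = I ∘ (φ(I·, ·) + φ(·, I·))`. If
`I² = -1`, then `U_I + V_I` and `U_I - V_I` are four times the projections onto the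
`I`-conjugate-bilinear and the `I`-bilinear maps, and `N_I = -(U_I + V_I) [·,·]`. When `IJ = -JI`,
the operators `U_I` and `U_J` commute, `U_I V_J + V_J U_I = 2 V_J`, and the commutator of `V_I` and
`V_J` produces the terms `[IA, JB] + [JA, IB]`. Hence
`4 N(I,J) = I ∘ J ∘ ((U_I - V_I) (U_J + V_J) - (U_J - V_J) (U_I + V_I)) [·,·]`,
and both products vanish on the bracket when `N_I = N_J = 0`.
-/

lemma sub_mul_add_sub_swap {S : Type*} [Ring S] {u v u' v' : S} (huu' : Commute u u')
    (huv' : u * v' + v' * u = 2 • v') (hu'v : u' * v + v * u' = 2 • v) :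
    (u - v) * (u' + v') - (u' - v') * (u + v) = 2 • v' - 2 • v - (v * v' - v' * v) := by
  rw [← huv', ← hu'v, sub_mul, sub_mul, mul_add, mul_add, mul_add, mul_add, huu'.eq]
  abel

section

variable {R E : Type*} [CommRing R] [AddCommGroup E] [Module R E]

/-- The form, bilinear in `(I, J)`, whose diagonal is the Nijenhuis torsion `N_I` and whose
symmetrization `nijenhuisForm br I J + nijenhuisForm br J I` is `2 N(I,J)`. Working with `2 N(I,J)`
avoids dividing by `2`. -/
def nijenhuisForm (br : E →ₗ[R] E →ₗ[R] E) (I J : Module.End R E) (A B : E) : E :=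
  br (I A) (J B) - I (br A (J B)) - J (br (I A) B) + I (J (br A B))

/-- The operator `U_I φ = φ - φ(I·, I·)` on bilinear maps. For `I² = -1` it is twice the projection
onto the maps satisfying `φ(I·, I·) = -φ`. -/
def antiInvariantPart (I : Module.End R E) : Module.End R (E →ₗ[R] E →ₗ[R] E) where
  toFun φ := φ - φ.compl₁₂ I I
  map_add' φ ψ := by
    ext
    simp only [LinearMap.sub_apply, LinearMap.add_apply, LinearMap.compl₁₂_apply]
    abel
  map_smul' c φ := by ext; simp [smul_sub]

/-- The operator `V_I φ = I ∘ (φ(I·, ·) + φ(·, I·))` on bilinear maps. For `I² = -1` it is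
twice the difference of the projections onto the `I`-conjugate-bilinear maps,
`φ(I·, ·) = φ(·, I·) = -I ∘ φ`, and onto the `I`-bilinear maps, `φ(I·, ·) = φ(·, I·) = I ∘ φ`. -/
def twistedSum (I : Module.End R E) : Module.End R (E →ₗ[R] E →ₗ[R] E) where
  toFun φ := (φ.comp I + φ.compl₂ I).compr₂ I
  map_add' φ ψ := by
    ext
    simp only [LinearMap.compr₂_apply, LinearMap.add_apply, LinearMap.comp_apply,
      LinearMap.compl₂_apply, map_add]
    abel
  map_smul' c φ := by ext; simp

/-- For `I² = -1`, four times the projection onto the `I`-bilinear maps; the factor keeps the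
definition free of division. -/
def bilinearPart (I : Module.End R E) : Module.End R (E →ₗ[R] E →ₗ[R] E) :=
  antiInvariantPart I - twistedSum I

/-- For `I² = -1`, four times the projection onto the `I`-conjugate-bilinear maps; applied to a
bracket it gives `-N_I`. -/
def conjugateBilinearPart (I : Module.End R E) : Module.End R (E →ₗ[R] E →ₗ[R] E) :=
  antiInvariantPart I + twistedSum I

lemma antiInvariantPart_apply (I : Module.End R E) (φ : E →ₗ[R] E →ₗ[R] E) (A B : E) :
    antiInvariantPart I φ A B = φ A B - φ (I A) (I B) := rfl

lemma twistedSum_apply (I : Module.End R E) (φ : E →ₗ[R] E →ₗ[R] E) (A B : E) :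
    twistedSum I φ A B = I (φ (I A) B + φ A (I B)) := rfl

lemma apply_apply_of_mul_self_eq_neg_one {I : Module.End R E} (hI : I * I = -1) (x : E) :
    I (I x) = -x :=
  LinearMap.congr_fun hI x

lemma nijenhuisForm_self_eq_neg_conjugateBilinearPart {I : Module.End R E} (hI : I * I = -1)
    (br : E →ₗ[R] E →ₗ[R] E) (A B : E) :
    nijenhuisForm br I I A B = -conjugateBilinearPart I br A B := by
  simp only [nijenhuisForm, conjugateBilinearPart, LinearMap.add_apply,
    apply_apply_of_mul_self_eq_neg_one hI, antiInvariantPart_apply, twistedSum_apply, map_add]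
  abel

lemma conjugateBilinearPart_eq_zero_of_integrable {br : E →ₗ[R] E →ₗ[R] E} {I : Module.End R E}
    (hI : I * I = -1) (hN : ∀ A B, nijenhuisForm br I I A B = 0) :
    conjugateBilinearPart I br = 0 := by
  ext A B
  exact neg_eq_zero.mp (nijenhuisForm_self_eq_neg_conjugateBilinearPart hI br A B ▸ hN A B)

section Anticommuting

variable {I J : Module.End R E}

lemma apply_apply_of_anticommute (hIJ : I * J = -(J * I)) (x : E) : I (J x) = -J (I x) :=
  LinearMap.congr_fun hIJ x

lemma commute_antiInvariantPart (hIJ : I * J = -(J * I)) :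
    Commute (antiInvariantPart I) (antiInvariantPart J) := by
  ext φ A B
  simp only [Module.End.mul_apply, antiInvariantPart_apply, apply_apply_of_anticommute hIJ,
    map_neg, LinearMap.neg_apply]
  abel

lemma antiInvariantPart_mul_twistedSum_add_swap (hIJ : I * J = -(J * I)) :
    antiInvariantPart I * twistedSum J + twistedSum J * antiInvariantPart I =
      2 • twistedSum J := by
  ext φ A B
  simp only [Module.End.mul_apply, LinearMap.add_apply, LinearMap.smul_apply,
    antiInvariantPart_apply, twistedSum_apply, apply_apply_of_anticommute hIJ,
    map_add, map_sub, map_neg, LinearMap.neg_apply]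
  abel

lemma twistedSum_mul_sub_mul_swap_apply (hIJ : I * J = -(J * I))
    (φ : E →ₗ[R] E →ₗ[R] E) (A B : E) :
    (twistedSum I * twistedSum J - twistedSum J * twistedSum I) φ A B =
      (2 : R) • I (J (φ (I A) (J B) + φ (J A) (I B))) := by
  simp only [Module.End.mul_apply, LinearMap.sub_apply, twistedSum_apply,
    apply_apply_of_anticommute hIJ, map_add, map_neg, LinearMap.neg_apply, two_smul]
  abel

lemma bilinearPart_mul_conjugateBilinearPart_sub_swap_apply (hIJ : I * J = -(J * I))
    (φ : E →ₗ[R] E →ₗ[R] E) (A B : E) :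
    (bilinearPart I * conjugateBilinearPart J - bilinearPart J * conjugateBilinearPart I) φ A B =
      (2 : R) • (twistedSum J φ A B - twistedSum I φ A B -
        I (J (φ (I A) (J B) + φ (J A) (I B)))) := by
  have hJI : J * I = -(I * J) := by rw [hIJ, neg_neg]
  have hparts := sub_mul_add_sub_swap (S := Module.End R (E →ₗ[R] E →ₗ[R] E))
    (commute_antiInvariantPart hIJ) (antiInvariantPart_mul_twistedSum_add_swap hIJ)
    (antiInvariantPart_mul_twistedSum_add_swap hJI)
  calc
    _ = (2 • twistedSum J - 2 • twistedSum I -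
          (twistedSum I * twistedSum J - twistedSum J * twistedSum I)) φ A B :=
      LinearMap.congr_fun₂ (LinearMap.congr_fun hparts φ) A B
    _ = 2 • twistedSum J φ A B - 2 • twistedSum I φ A B -
          (2 : R) • I (J (φ (I A) (J B) + φ (J A) (I B))) := by
      rw [← twistedSum_mul_sub_mul_swap_apply hIJ]
      rfl
    _ = _ := by module

lemma nijenhuisForm_add_swap (hIJ : I * J = -(J * I)) (br : E →ₗ[R] E →ₗ[R] E) (A B : E) :
    nijenhuisForm br I J A B + nijenhuisForm br J I A B =
      br (I A) (J B) + br (J A) (I B) - I (br (J A) B + br A (J B))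
        - J (br (I A) B + br A (I B)) := by
  simp only [nijenhuisForm, apply_apply_of_anticommute hIJ, map_add]
  abel

theorem two_smul_nijenhuisForm_add_swap (hI : I * I = -1) (hJ : J * J = -1)
    (hIJ : I * J = -(J * I)) (br : E →ₗ[R] E →ₗ[R] E) (A B : E) :
    (2 : R) • (nijenhuisForm br I J A B + nijenhuisForm br J I A B) =
      I (J ((bilinearPart I * conjugateBilinearPart J -
        bilinearPart J * conjugateBilinearPart I) br A B)) := by
  have hII := apply_apply_of_mul_self_eq_neg_one hI
  have hJJ := apply_apply_of_mul_self_eq_neg_one hJ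
  have hIJI (x : E) : I (J (I x)) = J x := by
    rw [apply_apply_of_anticommute hIJ, hII, map_neg, neg_neg]
  rw [bilinearPart_mul_conjugateBilinearPart_sub_swap_apply hIJ, nijenhuisForm_add_swap hIJ,
    map_smul, map_smul]
  congr 1
  simp only [twistedSum_apply, map_sub, hIJI, hJJ, map_neg]
  abel

end Anticommuting

theorem mixed_nijenhuis_vanishes_anticommuting_general (h2 : IsSMulRegular E (2 : R))
    (br : E →ₗ[R] E →ₗ[R] E) (I J : Module.End R E)
    (hI : I * I = -1) (hJ : J * J = -1) (hIJ : I * J = -(J * I))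
    (hNI : ∀ A B : E, nijenhuisForm br I I A B = 0)
    (hNJ : ∀ A B : E, nijenhuisForm br J J A B = 0) (A B : E) :
    nijenhuisForm br I J A B + nijenhuisForm br J I A B = 0 := by
  apply h2.right_eq_zero_of_smul
  rw [two_smul_nijenhuisForm_add_swap hI hJ hIJ, LinearMap.sub_apply, Module.End.mul_apply,
    Module.End.mul_apply, conjugateBilinearPart_eq_zero_of_integrable hI hNI,
    conjugateBilinearPart_eq_zero_of_integrable hJ hNJ]
  simp

end

section Real

variable {E : Type*} [AddCommGroup E] [Module ℝ E]

lemma Nij_eq_half_smul_nijenhuisForm_add_swap (br : E →ₗ[ℝ] E →ₗ[ℝ] E)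
    (I J : Module.End ℝ E) (A B : E) :
    Nij br I J A B = (1 / 2 : ℝ) • (nijenhuisForm br I J A B + nijenhuisForm br J I A B) := by
  simp only [Nij, nijenhuisForm]
  module

lemma Nij_self_eq_nijenhuisForm (br : E →ₗ[ℝ] E →ₗ[ℝ] E) (I : Module.End ℝ E) (A B : E) :
    Nij br I I A B = nijenhuisForm br I I A B := by
  rw [Nij_eq_half_smul_nijenhuisForm_add_swap]
  module

end Real

/-- if two anticommuting generalized complex structures are
integrable, then their mixed Nijenhuis concomitant vanishes. -/
theorem mixed_nijenhuis_vanishes_anticommuting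
    {E : Type*} [AddCommGroup E] [Module ℝ E]
    (br : E →ₗ[ℝ] E →ₗ[ℝ] E)
    (I J : Module.End ℝ E)
    (hI : I * I = -1) (hJ : J * J = -1) (hIJ : I * J = -(J * I))
    (hNI : ∀ A B : E, Nij br I I A B = 0)
    (hNJ : ∀ A B : E, Nij br J J A B = 0) :
    ∀ A B : E, Nij br I J A B = 0 := by
  simp only [Nij_self_eq_nijenhuisForm] at hNI hNJ
  intro A B
  rw [Nij_eq_half_smul_nijenhuisForm_add_swap,
    mixed_nijenhuis_vanishes_anticommuting_general (.of_ne_zero two_ne_zero) br I J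
      hI hJ hIJ hNI hNJ, smul_zero]
end

section
/- Let E be a real vector space with an ℝ-bilinear bracket [·,·], and let I, J be linear endomorphisms of E with I² = −Id and IJ + JI = 0 (J is an arbitrary endomorphism anticommuting with I). Then for all A,B ∈ E: 2·N(I,IJ)(A,B) = N_I(JA,B) + N_I(A,JB) + 2·I·N(I,J)(A,B). -/
/- The concomitant obeys a Leibniz-type rule in its endomorphism arguments once it is symmetrised in
`I` and `J`: in `N(I, J)(KA, B) + N(I, J)(A, KB)`, the terms such as `I[JA, KB]` that keep an
endomorphism on each argument inside an outer one are cancelled by `I N(J, K) + J N(I, K)`, and so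
are those such as `IJ[KA, B]`. On the diagonal this rule is the mixed identity. -/

section

variable {E : Type*} [AddCommGroup E] [Module ℝ E] (br : E →ₗ[ℝ] E →ₗ[ℝ] E)

theorem nij_mul_add_nij_mul (I J K : Module.End ℝ E) (A B : E) :
    Nij br I (J * K) A B + Nij br J (I * K) A B =
      Nij br I J (K A) B + Nij br I J A (K B)
        + I (Nij br J K A B) + J (Nij br I K A B) := by
  simp only [Nij, Module.End.mul_apply, map_smul, map_add, map_sub]
  module

theorem mixed_nijenhuis_I_IJ_general (I J : Module.End ℝ E) (A B : E) :
    (2 : ℝ) • Nij br I (I * J) A B =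
      Nij br I I (J A) B + Nij br I I A (J B) + (2 : ℝ) • I (Nij br I J A B) := by
  rw [two_smul, two_smul, nij_mul_add_nij_mul, add_assoc]

end

/-- the mixed Nijenhuis identity for `N(I, IJ)` when `I² = -Id` and
`J` anticommutes with `I`. -/
theorem mixed_nijenhuis_I_IJ
    {E : Type*} [AddCommGroup E] [Module ℝ E]
    (br : E →ₗ[ℝ] E →ₗ[ℝ] E)
    (I J : Module.End ℝ E)
    (hI : I * I = -1) (hIJ : I * J + J * I = 0) :
    ∀ A B : E, (2 : ℝ) • Nij br I (I * J) A B =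
      Nij br I I (J A) B + Nij br I I A (J B) + (2 : ℝ) • I (Nij br I J A B) := by
  exact mixed_nijenhuis_I_IJ_general br I J
end

section
/- Let (I₁,I₂,I₃) be a rank-3 Clifford triple on a real vector space E, with G = −I₁I₂I₃ and I_i^± = (1/2)(J_i ± I_i). Then E = ker(G − Id) ⊕ ker(G + Id); each I_i^+ maps ker(G − Id) into itself and vanishes on ker(G + Id), each I_i^− maps ker(G + Id) into itself and vanishes on ker(G − Id); and on ker(G − Id) the restrictions of (I₁^+, I₂^+, I₃^+) form a hypercomplex structure: (I_i^+)²A = −A and I_i^+I_j^+A = Σ_k ε_{ijk} I_k^+A for i ≠ j and all A ∈ ker(G − Id); analogously (I₁^−, I₂^−, I₃^−) form a hypercomplex structure on ker(G + Id). -/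
/-- Levi-Civita symbol on `Fin 3` (0-indexed: `eps 0 1 2 = 1`). -/
def eps (i j k : Fin 3) : ℝ :=
  if (i, j, k) = (0, 1, 2) ∨ (i, j, k) = (1, 2, 0) ∨ (i, j, k) = (2, 0, 1) then 1
  else if (i, j, k) = (0, 2, 1) ∨ (i, j, k) = (2, 1, 0) ∨ (i, j, k) = (1, 0, 2) then -1
  else 0

/-!
The volume element `G = -I₁I₂I₃` is a central involution in the algebra generated by the triple, and
`J_i = G I_i`. So `I_i^+` is `I_i` on the `+1` eigenspace of `G` and vanishes on the `-1` eigenspace,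
while `I_i I_j = ∑ ε_{ijk} J_k` becomes the quaternion relation `I_i I_j = ∑ ε_{ijk} I_k` on the
former. Replacing the triple by its negative fixes `J`, negates `G` and swaps the roles of `I_i^+`
and `I_i^-`, which gives the other half.
-/

/-- The Levi-Civita symbol on `Fin 3` with values in `ℤ`, so that it acts on every additive group. -/
def leviCivita (i j k : Fin 3) : ℤ :=
  if j = i + 1 ∧ k = i + 2 then 1 else if j = i + 2 ∧ k = i + 1 then -1 else 0

theorem eps_eq_leviCivita (i j k : Fin 3) : eps i j k = (leviCivita i j k : ℝ) := by
  fin_cases i <;> fin_cases j <;> fin_cases k <;> simp [eps, leviCivita]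

theorem sum_leviCivita_add_one_zsmul {M : Type*} [AddCommGroup M] (i : Fin 3) (v : Fin 3 → M) :
    ∑ k, leviCivita i (i + 1) k • v k = v (i + 2) := by
  simp [leviCivita, ite_smul]

theorem sum_leviCivita_add_two_zsmul {M : Type*} [AddCommGroup M] (i : Fin 3) (v : Fin 3 → M) :
    ∑ k, leviCivita i (i + 2) k • v k = -v (i + 1) := by
  simp [leviCivita, ite_smul]

section CliffordTriple

variable {A : Type*} [Ring A] {I : Fin 3 → A}

/-- A rank-3 Clifford triple in a ring: three anticommuting square roots of `-1`. -/
structure IsCliffordTriple (I : Fin 3 → A) : Prop where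
  mul_self : ∀ i, I i * I i = -1
  mul_eq_neg_mul : ∀ i j, i ≠ j → I i * I j = -(I j * I i)

/-- The volume element `G = -I₁I₂I₃` of a triple. -/
def cliffordVolume (I : Fin 3 → A) : A :=
  -(I 0 * I 1 * I 2)

/-- The dual triple `J₁ = I₂I₃`, `J₂ = I₃I₁`, `J₃ = I₁I₂`, with the cyclic shift of indices written
as addition in `Fin 3`. -/
def cliffordDual (I : Fin 3 → A) (i : Fin 3) : A :=
  I (i + 1) * I (i + 2)

theorem cliffordVolume_neg (I : Fin 3 → A) : cliffordVolume (-I) = -cliffordVolume I := by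
  simp [cliffordVolume]

theorem cliffordDual_neg (I : Fin 3 → A) : cliffordDual (-I) = cliffordDual I := by
  ext i
  simp [cliffordDual]

namespace IsCliffordTriple

theorem of_mul_add_mul [Invertible (2 : A)]
    (h : ∀ i j, I i * I j + I j * I i = if i = j then -2 else 0) : IsCliffordTriple I where
  mul_self i := by
    have htwo : 2 * (I i * I i) = 2 * -1 := by
      rw [two_mul, h, if_pos rfl, mul_neg_one]
    exact (isUnit_of_invertible (2 : A)).mul_left_cancel htwo
  mul_eq_neg_mul i j hij := eq_neg_of_add_eq_zero_left (by rw [h, if_neg hij])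

theorem neg (hI : IsCliffordTriple I) : IsCliffordTriple (-I) where
  mul_self i := by simp [hI.mul_self i]
  mul_eq_neg_mul i j hij := by simp [hI.mul_eq_neg_mul i j hij]

theorem commute_cliffordDual (hI : IsCliffordTriple I) (i : Fin 3) :
    Commute (I i) (cliffordDual I i) := by
  calc I i * (I (i + 1) * I (i + 2))
      = -(I (i + 1) * (I i * I (i + 2))) := by
        rw [← mul_assoc, hI.mul_eq_neg_mul i (i + 1) (by simp), neg_mul, mul_assoc]
    _ = I (i + 1) * I (i + 2) * I i := by
        rw [hI.mul_eq_neg_mul i (i + 2) (by simp), mul_neg, neg_neg, mul_assoc]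

theorem cliffordDual_mul_self (hI : IsCliffordTriple I) (i : Fin 3) :
    cliffordDual I i * cliffordDual I i = -1 := by
  calc I (i + 1) * I (i + 2) * (I (i + 1) * I (i + 2))
      = I (i + 1) * (I (i + 2) * I (i + 1)) * I (i + 2) := by simp only [mul_assoc]
    _ = -(I (i + 1) * I (i + 1) * (I (i + 2) * I (i + 2))) := by
        rw [hI.mul_eq_neg_mul (i + 2) (i + 1) (by simp)]
        simp only [mul_neg, neg_mul, mul_assoc]
    _ = -1 := by simp [hI.mul_self]

theorem mul_cliffordDual (hI : IsCliffordTriple I) (i : Fin 3) :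
    I i * cliffordDual I i = -cliffordVolume I := by
  have cyclic (j : Fin 3) :
      I (j + 1) * cliffordDual I (j + 1) = I j * cliffordDual I j := by
    rw [hI.commute_cliffordDual j]
    fin_cases j <;> simp [cliffordDual, mul_assoc]
  have zero : I 0 * cliffordDual I 0 = -cliffordVolume I := by
    simp [cliffordDual, cliffordVolume, mul_assoc]
  fin_cases i
  · exact zero
  · exact (cyclic 0).trans zero
  · exact (cyclic 1).trans ((cyclic 0).trans zero)

theorem cliffordVolume_mul (hI : IsCliffordTriple I) (i : Fin 3) :
    cliffordVolume I * I i = cliffordDual I i := by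
  rw [← neg_eq_iff_eq_neg.mpr (hI.mul_cliffordDual i), hI.commute_cliffordDual i, neg_mul,
    mul_assoc, hI.mul_self, mul_neg_one, neg_neg]

theorem commute_cliffordVolume (hI : IsCliffordTriple I) (i : Fin 3) :
    Commute (cliffordVolume I) (I i) := by
  rw [← neg_eq_iff_eq_neg.mpr (hI.mul_cliffordDual i)]
  exact ((Commute.refl (I i)).mul_left (hI.commute_cliffordDual i).symm).neg_left

theorem cliffordVolume_mul_self (hI : IsCliffordTriple I) :
    cliffordVolume I * cliffordVolume I = 1 := by
  calc cliffordVolume I * cliffordVolume I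
      = -(cliffordVolume I * I 0 * cliffordDual I 0) := by
        rw [mul_assoc, hI.mul_cliffordDual, mul_neg, neg_neg]
    _ = 1 := by rw [hI.cliffordVolume_mul, hI.cliffordDual_mul_self, neg_neg]

theorem mul_eq_sum_leviCivita (hI : IsCliffordTriple I) {i j : Fin 3} (hij : i ≠ j) :
    I i * I j = ∑ k, leviCivita i j k • cliffordDual I k := by
  obtain rfl | rfl : j = i + 1 ∨ j = i + 2 := by lia
  · rw [sum_leviCivita_add_one_zsmul]
    fin_cases i <;> rfl
  · rw [sum_leviCivita_add_two_zsmul, hI.mul_eq_neg_mul _ _ hij]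
    fin_cases i <;> rfl

end IsCliffordTriple

end CliffordTriple

section Eigenspaces

variable {R E : Type*} [Ring R] [AddCommGroup E] [Module R E]

theorem mem_ker_sub_one {f : Module.End R E} {x : E} : x ∈ LinearMap.ker (f - 1) ↔ f x = x := by
  simp [sub_eq_zero]

theorem mem_ker_add_one {f : Module.End R E} {x : E} : x ∈ LinearMap.ker (f + 1) ↔ f x = -x := by
  simp [add_eq_zero_iff_eq_neg]

/-- The endomorphisms `K₁, K₂, K₃` restrict to a hypercomplex structure on the submodule `p`:
they preserve `p` and satisfy the quaternion relations there. -/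
structure IsHypercomplexOn (K : Fin 3 → Module.End R E) (p : Submodule R E) : Prop where
  apply_mem : ∀ i, ∀ x ∈ p, K i x ∈ p
  apply_apply_self : ∀ i, ∀ x ∈ p, K i (K i x) = -x
  apply_apply : ∀ i j, i ≠ j → ∀ x ∈ p, K i (K j x) = ∑ k, leviCivita i j k • K k x

theorem IsHypercomplexOn.congr {K L : Fin 3 → Module.End R E} {p : Submodule R E}
    (hK : IsHypercomplexOn K p) (hKL : ∀ i, ∀ x ∈ p, L i x = K i x) : IsHypercomplexOn L p where
  apply_mem i x hx := by
    rw [hKL i x hx]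
    exact hK.apply_mem i x hx
  apply_apply_self i x hx := by
    rw [hKL i x hx, hKL i _ (hK.apply_mem i x hx), hK.apply_apply_self i x hx]
  apply_apply i j hij x hx := by
    simp only [hKL _ x hx, hKL i _ (hK.apply_mem j x hx), hK.apply_apply i j hij x hx]

theorem IsCliffordTriple.isHypercomplexOn_ker_sub_one {I : Fin 3 → Module.End R E}
    (hI : IsCliffordTriple I) : IsHypercomplexOn I (LinearMap.ker (cliffordVolume I - 1)) where
  apply_mem i x hx := by
    rw [mem_ker_sub_one] at hx ⊢
    rw [← Module.End.mul_apply, hI.commute_cliffordVolume i, Module.End.mul_apply, hx]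
  apply_apply_self i x _ := by
    rw [← Module.End.mul_apply, hI.mul_self]
    simp
  apply_apply i j hij x hx := by
    have dual_apply (k : Fin 3) : cliffordDual I k x = I k x := by
      rw [← hI.cliffordVolume_mul, hI.commute_cliffordVolume k, Module.End.mul_apply,
        mem_ker_sub_one.mp hx]
    rw [← Module.End.mul_apply, hI.mul_eq_sum_leviCivita hij]
    simp only [LinearMap.sum_apply, LinearMap.smul_apply, dual_apply]

theorem ker_cliffordVolume_neg_sub_one (I : Fin 3 → Module.End R E) :
    LinearMap.ker (cliffordVolume (-I) - 1) = LinearMap.ker (cliffordVolume I + 1) := by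
  rw [cliffordVolume_neg, ← neg_add', LinearMap.ker_neg]

theorem ker_cliffordVolume_neg_add_one (I : Fin 3 → Module.End R E) :
    LinearMap.ker (cliffordVolume (-I) + 1) = LinearMap.ker (cliffordVolume I - 1) := by
  rw [cliffordVolume_neg, neg_add_eq_sub, ← neg_sub, LinearMap.ker_neg]

theorem isCompl_ker_sub_one_ker_add_one [Invertible (2 : R)] {f : Module.End R E} (hf : f * f = 1) :
    IsCompl (LinearMap.ker (f - 1)) (LinearMap.ker (f + 1)) := by
  have f_apply_apply (x : E) : f (f x) = x := by
    rw [← Module.End.mul_apply, hf, Module.End.one_apply]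
  have halves (x : E) : ⅟(2 : R) • (x + f x) + ⅟(2 : R) • (x - f x) = x := by
    rw [← smul_add, add_add_sub_cancel, ← two_smul R, invOf_smul_smul]
  refine IsCompl.of_eq ?_ ?_
  · refine (Submodule.eq_bot_iff _).mpr fun x ⟨hx, hx'⟩ ↦ ?_
    rw [← halves x]
    nth_rw 1 [mem_ker_add_one.mp hx']
    simp [mem_ker_sub_one.mp hx]
  · refine Submodule.eq_top_iff'.mpr fun x ↦ Submodule.mem_sup.mpr
      ⟨⅟(2 : R) • (x + f x), mem_ker_sub_one.mpr ?_, ⅟(2 : R) • (x - f x),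
        mem_ker_add_one.mpr ?_, halves x⟩
    · rw [map_smul, map_add, f_apply_apply, add_comm]
    · rw [map_smul, map_sub, f_apply_apply, ← smul_neg, neg_sub]

end Eigenspaces

section CliffordPlus

variable {R E : Type*} [CommRing R] [Invertible (2 : R)] [AddCommGroup E] [Module R E]

/-- The operators `I_i^+ = (J_i + I_i) / 2` of a triple `I`. As `J` is even in `I`, the operators
`I_i^- = (J_i - I_i) / 2` are those of the opposite triple `-I`. -/
def cliffordPlus (I : Fin 3 → Module.End R E) (i : Fin 3) : Module.End R E :=
  ⅟(2 : R) • (cliffordDual I i + I i)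

theorem cliffordPlus_neg (I : Fin 3 → Module.End R E) (i : Fin 3) :
    cliffordPlus (-I) i = ⅟(2 : R) • (cliffordDual I i - I i) := by
  rw [cliffordPlus, cliffordDual_neg, Pi.neg_apply, sub_eq_add_neg]

namespace IsCliffordTriple

variable {I : Fin 3 → Module.End R E}

theorem cliffordPlus_apply (hI : IsCliffordTriple I) (i : Fin 3) (x : E) :
    cliffordPlus I i x = I i (⅟(2 : R) • (cliffordVolume I x + x)) := by
  simp [cliffordPlus, ← hI.cliffordVolume_mul, (hI.commute_cliffordVolume i).eq]

theorem cliffordPlus_apply_of_mem_ker_sub_one (hI : IsCliffordTriple I) (i : Fin 3) (x : E)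
    (hx : x ∈ LinearMap.ker (cliffordVolume I - 1)) : cliffordPlus I i x = I i x := by
  rw [hI.cliffordPlus_apply, mem_ker_sub_one.mp hx, ← two_smul R, invOf_smul_smul]

theorem cliffordPlus_apply_of_mem_ker_add_one (hI : IsCliffordTriple I) (i : Fin 3) (x : E)
    (hx : x ∈ LinearMap.ker (cliffordVolume I + 1)) : cliffordPlus I i x = 0 := by
  rw [hI.cliffordPlus_apply, mem_ker_add_one.mp hx, neg_add_cancel, smul_zero, map_zero]

theorem isHypercomplexOn_cliffordPlus (hI : IsCliffordTriple I) :
    IsHypercomplexOn (cliffordPlus I) (LinearMap.ker (cliffordVolume I - 1)) :=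
  hI.isHypercomplexOn_ker_sub_one.congr hI.cliffordPlus_apply_of_mem_ker_sub_one

end IsCliffordTriple

end CliffordPlus

theorem clifford_splitting_hypercomplex_general
    {R E : Type*} [CommRing R] [Invertible (2 : R)] [AddCommGroup E] [Module R E]
    (I : Fin 3 → Module.End R E)
    (hCl : ∀ i j, I i * I j + I j * I i = if i = j then (-2 : Module.End R E) else 0)
    (J : Fin 3 → Module.End R E)
    (hJ0 : J 0 = I 1 * I 2) (hJ1 : J 1 = I 2 * I 0) (hJ2 : J 2 = I 0 * I 1)
    (G : Module.End R E) (hG : G = -(I 0 * I 1 * I 2))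
    (Ip Im : Fin 3 → Module.End R E)
    (hIp : ∀ i, Ip i = ⅟(2 : R) • (J i + I i))
    (hIm : ∀ i, Im i = ⅟(2 : R) • (J i - I i)) :
    IsCompl (LinearMap.ker (G - 1)) (LinearMap.ker (G + 1)) ∧
    (∀ i, ∀ A ∈ LinearMap.ker (G - 1), Ip i A ∈ LinearMap.ker (G - 1)) ∧
    (∀ i, ∀ A ∈ LinearMap.ker (G + 1), Ip i A = 0) ∧
    (∀ i, ∀ A ∈ LinearMap.ker (G + 1), Im i A ∈ LinearMap.ker (G + 1)) ∧
    (∀ i, ∀ A ∈ LinearMap.ker (G - 1), Im i A = 0) ∧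
    (∀ i, ∀ A ∈ LinearMap.ker (G - 1), Ip i (Ip i A) = -A) ∧
    (∀ i j, i ≠ j → ∀ A ∈ LinearMap.ker (G - 1),
      Ip i (Ip j A) = ∑ k, leviCivita i j k • Ip k A) ∧
    (∀ i, ∀ A ∈ LinearMap.ker (G + 1), Im i (Im i A) = -A) ∧
    (∀ i j, i ≠ j → ∀ A ∈ LinearMap.ker (G + 1),
      Im i (Im j A) = ∑ k, leviCivita i j k • Im k A) := by
  obtain rfl : J = cliffordDual I := by
    ext1 i
    fin_cases i
    exacts [hJ0, hJ1, hJ2]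
  obtain rfl : Ip = cliffordPlus I := funext hIp
  obtain rfl : Im = cliffordPlus (-I) := funext fun i ↦ (hIm i).trans (cliffordPlus_neg I i).symm
  obtain rfl : G = cliffordVolume I := hG
  have hI : IsCliffordTriple I := .of_mul_add_mul hCl
  have plus := hI.isHypercomplexOn_cliffordPlus
  have minus := hI.neg.isHypercomplexOn_cliffordPlus
  have minus_vanishes := hI.neg.cliffordPlus_apply_of_mem_ker_add_one
  rw [ker_cliffordVolume_neg_sub_one] at minus
  rw [ker_cliffordVolume_neg_add_one] at minus_vanishes
  exact ⟨isCompl_ker_sub_one_ker_add_one hI.cliffordVolume_mul_self,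
    plus.apply_mem, hI.cliffordPlus_apply_of_mem_ker_add_one,
    minus.apply_mem, minus_vanishes,
    plus.apply_apply_self, plus.apply_apply,
    minus.apply_apply_self, minus.apply_apply⟩

/-- `E` splits as `ker(G - Id) ⊕ ker(G + Id)`; the `I_i^+` preserve the
`+1` eigenspace of `G` and vanish on the `-1` eigenspace (and vice versa for `I_i^-`),
and the restrictions of `(I₁^±, I₂^±, I₃^±)` define hypercomplex structures on the
respective eigenspaces. -/
theorem clifford_splitting_hypercomplex
    {E : Type*} [AddCommGroup E] [Module ℝ E]
    (I : Fin 3 → Module.End ℝ E)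
    (hCl : ∀ i j, I i * I j + I j * I i = if i = j then (-2 : Module.End ℝ E) else 0)
    (J : Fin 3 → Module.End ℝ E)
    (hJ0 : J 0 = I 1 * I 2) (hJ1 : J 1 = I 2 * I 0) (hJ2 : J 2 = I 0 * I 1)
    (G : Module.End ℝ E) (hG : G = -(I 0 * I 1 * I 2))
    (Ip Im : Fin 3 → Module.End ℝ E)
    (hIp : ∀ i, Ip i = (1 / 2 : ℝ) • (J i + I i))
    (hIm : ∀ i, Im i = (1 / 2 : ℝ) • (J i - I i)) :
    -- the eigenspace decomposition E = ker(G - Id) ⊕ ker(G + Id)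
    IsCompl (LinearMap.ker (G - 1)) (LinearMap.ker (G + 1)) ∧
    -- I_i^+ preserves ker(G - Id) and vanishes on ker(G + Id)
    (∀ i, ∀ A ∈ LinearMap.ker (G - 1), Ip i A ∈ LinearMap.ker (G - 1)) ∧
    (∀ i, ∀ A ∈ LinearMap.ker (G + 1), Ip i A = 0) ∧
    -- I_i^- preserves ker(G + Id) and vanishes on ker(G - Id)
    (∀ i, ∀ A ∈ LinearMap.ker (G + 1), Im i A ∈ LinearMap.ker (G + 1)) ∧
    (∀ i, ∀ A ∈ LinearMap.ker (G - 1), Im i A = 0) ∧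
    -- hypercomplex structure on ker(G - Id)
    (∀ i, ∀ A ∈ LinearMap.ker (G - 1), Ip i (Ip i A) = -A) ∧
    (∀ i j, i ≠ j → ∀ A ∈ LinearMap.ker (G - 1),
      Ip i (Ip j A) = ∑ k, eps i j k • Ip k A) ∧
    -- hypercomplex structure on ker(G + Id)
    (∀ i, ∀ A ∈ LinearMap.ker (G + 1), Im i (Im i A) = -A) ∧
    (∀ i j, i ≠ j → ∀ A ∈ LinearMap.ker (G + 1),
      Im i (Im j A) = ∑ k, eps i j k • Im k A) := by
  simpa only [eps_eq_leviCivita, Int.cast_smul_eq_zsmul] using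
    clifford_splitting_hypercomplex_general I hCl J hJ0 hJ1 hJ2 G hG Ip Im
      (by simpa using hIp) (by simpa using hIm)
end
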